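/- Let m ≥ 3 be odd, set r = (m−1)/2, and let α : Fin r → ℝ satisfy α i > 0 for every i, with d_m, viewed in ℝ[X], equal to ∏_{i} (X − α i)·(X − (α i)⁻¹). Then for every odd n ≥ 3 there exists an integer k > 1 such that ∏_{i} ((α i)^n + (α i)^(−n) − 2) = (k : ℝ)²; that is, for n odd the number G_{m,n} is a perfect square of an integer greater than one. -/

import Mathlib

open Polynomial

/-- The polynomials d_m: d_2 = 1 − X, d_3 = 1 − 3X + X²,
d_{m+1} = (1 − X)·d_m − X·d_{m−1} for m ≥ 3. -/
noncomputable def dpoly : ℕ → Polynomial ℤ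
  | 0 => 0
  | 1 => 0
  | 2 => 1 - X
  | 3 => 1 - 3 * X + X ^ 2
  | (m + 4) => (1 - X) * dpoly (m + 3) - X * dpoly (m + 2)

/-!
Put `β = α + α⁻¹` for each pair of roots. Then `α ^ n + α ^ (-n) = C_n(β)` for the Vieta–Lucas
polynomial `C_n`, and for `n = 2h + 1` one has `C_n - 2 = (X - 2) * W_h ^ 2` with `W_h ∈ ℤ[X]`.
The same family describes `d_m`: for `m = 2r + 1`, `d_m(x) = x ^ r * W_r(x + x⁻¹ - 4)`, so the `β`
are the roots of the monic integer polynomial `W_r(X - 4)`. Its value at `2` is `± 1`, so the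
factors `β - 2` multiply to `1` and `G_{m,n} = (∏ W_h(β)) ^ 2`. The product `∏ W_h(β)` is a
resultant of integer polynomials, hence an integer, and it exceeds `1` because `W_h(β) ≥ 2h + 1`
for `β ≥ 2`.
-/

section ChebyshevW

/-- The Chebyshev polynomials of the fourth kind, rescaled in the manner of
`Polynomial.Chebyshev.S`, so that `chebyshevW R n` at `2 cos θ` is `sin ((n + 1/2) θ) / sin (θ/2)`.
They occur both as square roots of `(Chebyshev.C R (2 * n + 1) - 2) / (X - 2)` and in `dpoly`. -/
noncomputable def chebyshevW (R : Type*) [CommRing R] (n : ℤ) : R[X] :=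
  Chebyshev.S R n + Chebyshev.S R (n - 1)

variable (R : Type*) [CommRing R]

@[simp]
lemma chebyshevW_zero : chebyshevW R 0 = 1 := by
  simp [chebyshevW, Chebyshev.S_neg_one]

@[simp]
lemma chebyshevW_one : chebyshevW R 1 = X + 1 := by
  simp [chebyshevW]

lemma chebyshevW_add_two (n : ℤ) :
    chebyshevW R (n + 2) = X * chebyshevW R (n + 1) - chebyshevW R n := by
  have h := Chebyshev.S_add_one R n
  rw [chebyshevW, chebyshevW, chebyshevW, Chebyshev.S_add_two, show n + 2 - 1 = n + 1 by ring,
    add_sub_cancel_right]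
  linear_combination h

lemma map_chebyshevW {S : Type*} [CommRing S] (f : R →+* S) (n : ℤ) :
    (chebyshevW R n).map f = chebyshevW S n := by
  simp [chebyshevW]

lemma chebyshevW_eval_neg_two (n : ℤ) : (chebyshevW R n).eval (-2) = n.negOnePow := by
  simp only [chebyshevW, eval_add, Chebyshev.S_eval_neg_two, Int.negOnePow_sub,
    Int.negOnePow_one]
  push_cast
  ring

lemma chebyshev_C_two_mul_add_one_sub_two (n : ℤ) :
    Chebyshev.C R (2 * n + 1) - 2 = (X - 2) * chebyshevW R n ^ 2 := by
  have h_mul : Chebyshev.C R (n + 1) * Chebyshev.C R n = Chebyshev.C R (2 * n + 1) + X := by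
    rw [Chebyshev.C_mul_C, add_sub_cancel_left, Chebyshev.C_one]
    ring_nf
  have h_C := Chebyshev.C_eq_S_sub_X_mul_S R n
  have h_C_succ := Chebyshev.C_eq_S_sub_X_mul_S R (n + 1)
  have h_S := Chebyshev.S_add_one R n
  have h_sq := Chebyshev.S_sq_add_S_sq R (n - 1)
  rw [add_sub_cancel_right] at h_C_succ
  rw [sub_add_cancel] at h_sq
  rw [h_C, h_C_succ, h_S] at h_mul
  rw [chebyshevW]
  linear_combination (X + 2) * h_sq - h_mul

variable {R}

lemma pow_add_pow_sub_two_of_mul_eq_one {x y : R} (hxy : x * y = 1) (n : ℕ) :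
    x ^ (2 * n + 1) + y ^ (2 * n + 1) - 2 =
      (x + y - 2) * (chebyshevW R n).eval (x + y) ^ 2 := by
  have h_factor := congrArg (eval (x + y)) (chebyshev_C_two_mul_add_one_sub_two R n)
  rw [← dickson_one_one_eval_add_inv x y hxy, dickson_one_one_eq_chebyshev_C]
  simpa using h_factor

section Order

variable [LinearOrder R] [IsStrictOrderedRing R] {y : R}

lemma two_mul_add_one_le_chebyshevW_eval (hy : 2 ≤ y) (n : ℕ) :
    2 * (n : R) + 1 ≤ (chebyshevW R n).eval y := by
  suffices 2 * (n : R) + 1 ≤ (chebyshevW R n).eval y ∧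
      (chebyshevW R n).eval y + 2 ≤ (chebyshevW R (n + 1)).eval y from this.1
  induction n with
  | zero =>
    simp only [Nat.cast_zero, mul_zero, zero_add, chebyshevW_zero, eval_one, le_refl,
      chebyshevW_one, eval_add, eval_X, true_and]
    linarith
  | succ n ih =>
    obtain ⟨h_lower, h_step⟩ := ih
    push_cast
    refine ⟨by linarith, ?_⟩
    rw [add_assoc (n : ℤ), one_add_one_eq_two, chebyshevW_add_two, eval_sub, eval_mul, eval_X]
    have h_nonneg : 0 ≤ (chebyshevW R (n + 1)).eval y := by
      linarith [n.cast_nonneg (α := R)]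
    linarith [mul_le_mul_of_nonneg_right hy h_nonneg]

lemma one_lt_chebyshevW_eval (hy : 2 ≤ y) {n : ℕ} (hn : 1 ≤ n) :
    1 < (chebyshevW R n).eval y := by
  have h_cast : (1 : R) ≤ n := by exact_mod_cast hn
  linarith [two_mul_add_one_le_chebyshevW_eval hy n]

end Order

end ChebyshevW

section AddInv

variable {K : Type*} [Field K]

lemma add_inv_eq_add_inv_iff {x y : K} (hx : x ≠ 0) (hy : y ≠ 0) :
    x + x⁻¹ = y + y⁻¹ ↔ x = y ∨ x = y⁻¹ := by
  calc x + x⁻¹ = y + y⁻¹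
    _ ↔ (x - y) * (x - y⁻¹) = 0 := by
      field_simp
      constructor <;> intro h <;> linear_combination h
    _ ↔ x = y ∨ x = y⁻¹ := by rw [mul_eq_zero, sub_eq_zero, sub_eq_zero]

lemma infinite_image_add_inv [Infinite K] : ((fun x : K ↦ x + x⁻¹) '' {0}ᶜ).Infinite := by
  intro h_fin
  refine (Set.finite_singleton (0 : K)).infinite_compl
    ((h_fin.preimage' ?_).subset (Set.subset_preimage_image _ _))
  rintro _ ⟨x, hx, rfl⟩
  refine ({0, x, x⁻¹} : Set K).toFinite.subset fun y hy ↦ ?_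
  by_cases hy₀ : y = 0
  · exact .inl hy₀
  · exact .inr ((add_inv_eq_add_inv_iff hy₀ hx).mp hy)

lemma eq_of_eval_add_inv_eq [Infinite K] {p q : K[X]}
    (h : ∀ x ≠ 0, p.eval (x + x⁻¹) = q.eval (x + x⁻¹)) : p = q := by
  refine eq_of_infinite_eval_eq p q (infinite_image_add_inv.mono ?_)
  rintro _ ⟨x, hx, rfl⟩
  exact h x hx

lemma two_le_add_inv [LinearOrder K] [IsStrictOrderedRing K] {x : K}
    (hx : 0 < x) : 2 ≤ x + x⁻¹ := by
  have h_sq : x + x⁻¹ - 2 = (x - 1) ^ 2 / x := by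
    field_simp
    ring
  have : 0 ≤ (x - 1) ^ 2 / x := by positivity
  linarith

end AddInv

lemma algebraMap_resultant_eq_prod_aeval {R S ι : Type*} [CommRing R] [CommRing S] [Algebra R S]
    [Nontrivial S] (s : Finset ι) (β : ι → S) {p : R[X]}
    (hp : p.map (algebraMap R S) = ∏ i ∈ s, (X - C (β i))) (q : R[X]) :
    algebraMap R S (resultant p q s.card q.natDegree) = ∏ i ∈ s, aeval (β i) q := by
  have h_deg : (∏ i ∈ s, (X - C (β i))).natDegree = s.card :=
    natDegree_finsetProd_X_sub_C_eq_card s β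
  have h_prod := resultant_prod_left s (fun i ↦ X - C (β i)) (q.map (algebraMap R S)) q.natDegree
    (by simp) natDegree_map_le
  rw [← resultant_map_map, hp, ← h_deg, h_prod]
  refine Finset.prod_congr rfl fun i _ ↦ ?_
  rw [natDegree_X_sub_C, resultant_X_sub_C_left _ _ _ natDegree_map_le, eval_map_algebraMap]

lemma dpoly_add_six (m : ℕ) :
    dpoly (m + 6) = (1 - 4 * X + X ^ 2) * dpoly (m + 4) - X ^ 2 * dpoly (m + 2) := by
  have h₄ : dpoly (m + 4) = (1 - X) * dpoly (m + 3) - X * dpoly (m + 2) := by rw [dpoly]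
  have h₅ : dpoly (m + 5) = (1 - X) * dpoly (m + 4) - X * dpoly (m + 3) := by rw [dpoly]
  have h₆ : dpoly (m + 6) = (1 - X) * dpoly (m + 5) - X * dpoly (m + 4) := by rw [dpoly]
  linear_combination h₆ + (1 - X) * h₅ + X * h₄

lemma aeval_dpoly_two_mul_add_three {R : Type*} [CommRing R] {x y : R} (hxy : x * y = 1) (r : ℕ) :
    aeval x (dpoly (2 * r + 3)) = x ^ (r + 1) * (chebyshevW R (r + 1)).eval (x + y - 4) := by
  induction r using Nat.twoStepInduction with
  | zero =>
    simp only [dpoly, map_add, map_sub, map_one, map_mul, map_ofNat, aeval_X, map_pow, zero_add,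
      pow_one, Nat.cast_zero, chebyshevW_one, eval_add, eval_X, eval_one]
    linear_combination -hxy
  | one =>
    have h_two := chebyshevW_add_two R 0
    simp only [zero_add, chebyshevW_one, chebyshevW_zero] at h_two
    simp only [dpoly, map_sub, map_mul, map_one, aeval_X, map_add, map_ofNat, map_pow,
      one_add_one_eq_two, Nat.cast_one, h_two, eval_sub, eval_mul, eval_X, eval_add, eval_one]
    linear_combination (-(x * y) + 7 * x - 1 - 2 * x ^ 2) * hxy
  | more r ih ih_succ =>
    have h_rec := chebyshevW_add_two R (r + 1)
    push_cast at ih_succ ⊢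
    rw [show 2 * (r + 2) + 3 = 2 * r + 1 + 6 by ring, dpoly_add_six,
      show (r : ℤ) + 2 + 1 = r + 1 + 2 by ring, h_rec]
    simp only [map_sub, map_mul, map_add, map_pow, aeval_X, map_one, map_ofNat, eval_sub, eval_mul,
      eval_X]
    rw [show 2 * (r + 1) + 3 = 2 * r + 1 + 4 by ring] at ih_succ
    rw [show 2 * r + 1 + 2 = 2 * r + 3 by ring, ih, ih_succ]
    linear_combination -(x ^ (r + 2) * (chebyshevW R (r + 1 + 1)).eval (x + y - 4)) * hxy

section Roots

variable {ι : Type*} [Fintype ι] {r : ℕ}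

lemma chebyshevW_comp_eq_prod {K : Type*} [Field K] [Infinite K] {α : ι → K}
    (hι : Fintype.card ι = r + 1) (hα : ∀ i, α i ≠ 0)
    (hd : (dpoly (2 * r + 3)).map (Int.castRingHom K) = ∏ i, (X - C (α i)) * (X - C (α i)⁻¹)) :
    (chebyshevW K (r + 1)).comp (X - 4) = ∏ i, (X - C (α i + (α i)⁻¹)) := by
  refine eq_of_eval_add_inv_eq fun x hx ↦ ?_
  have h_scaled :=
    calc x ^ (r + 1) * ((chebyshevW K (r + 1)).comp (X - 4)).eval (x + x⁻¹)
      _ = ((dpoly (2 * r + 3)).map (Int.castRingHom K)).eval x := by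
        rw [← algebraMap_int_eq, eval_map_algebraMap,
          aeval_dpoly_two_mul_add_three (mul_inv_cancel₀ hx)]
        simp [eval_comp]
      _ = ∏ i, x * (x + x⁻¹ - (α i + (α i)⁻¹)) := by
        rw [hd, eval_prod]
        refine Finset.prod_congr rfl fun i _ ↦ ?_
        have := hα i
        simp only [eval_mul, eval_sub, eval_X, eval_C]
        field_simp
        ring
      _ = x ^ (r + 1) * (∏ i, (X - C (α i + (α i)⁻¹))).eval (x + x⁻¹) := by
        simp [Finset.prod_mul_distrib, hι, eval_prod]
  exact mul_left_cancel₀ (pow_ne_zero (r + 1) hx) h_scaled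

variable {R : Type*} [CommRing R] {β : ι → R}

lemma prod_sub_two_eq_one_of_chebyshevW_comp_eq_prod (hι : Fintype.card ι = r)
    (hβ : (chebyshevW R r).comp (X - 4) = ∏ i, (X - C (β i))) : ∏ i, (β i - 2) = 1 := by
  calc ∏ i, (β i - 2)
    _ = ∏ i, -1 * (2 - β i) := Finset.prod_congr rfl fun i _ ↦ by ring
    _ = (-1) ^ r * (∏ i, (X - C (β i))).eval 2 := by
      simp only [Finset.prod_mul_distrib, Finset.prod_const, Finset.card_univ, hι, eval_prod,
        eval_sub, eval_X, eval_C]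
    _ = (-1) ^ r * (chebyshevW R r).eval (-2) := by
      rw [← hβ, eval_comp, eval_sub, eval_X, eval_ofNat]
      norm_num
    _ = 1 := by simp [chebyshevW_eval_neg_two, ← mul_pow]

lemma exists_int_eq_prod_chebyshevW_eval [Nontrivial R] {m : ℤ}
    (hβ : (chebyshevW R m).comp (X - 4) = ∏ i, (X - C (β i))) (n : ℤ) :
    ∃ k : ℤ, k = ∏ i, (chebyshevW R n).eval (β i) := by
  have h_map : ((chebyshevW ℤ m).comp (X - 4)).map (algebraMap ℤ R) = ∏ i, (X - C (β i)) := by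
    rw [Polynomial.map_comp, map_chebyshevW, Polynomial.map_sub, map_X, Polynomial.map_ofNat, hβ]
  have h_res := algebraMap_resultant_eq_prod_aeval _ _ h_map (chebyshevW ℤ n)
  simp only [← eval_map_algebraMap, map_chebyshevW] at h_res
  exact ⟨_, h_res⟩

end Roots

lemma one_lt_prod_of_one_lt {ι R : Type*} [CommSemiring R] [LinearOrder R] [IsStrictOrderedRing R]
    {s : Finset ι} {f : ι → R} (hs : s.Nonempty) (hf : ∀ i ∈ s, 1 < f i) :
    1 < ∏ i ∈ s, f i := by
  simpa using Finset.prod_lt_prod_of_nonempty (fun _ _ ↦ one_pos) hf hs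

/-- Let m ≥ 3 be odd, with the roots of d_m given by the positive real pairs
α i, (α i)⁻¹ for i in Fin ((m−1)/2).  Then for every odd n ≥ 3, the number
G_{m,n} = ∏_i ((α i)^n + (α i)^(−n) − 2) is the square of an integer
greater than one. -/
theorem stmt_15 (m : ℕ) (hm : 3 ≤ m) (hmo : Odd m)
    (α : Fin ((m - 1) / 2) → ℝ) (hpos : ∀ i, 0 < α i)
    (hd : (dpoly m).map (Int.castRingHom ℝ) =
      ∏ i, (X - C (α i)) * (X - C (α i)⁻¹))
    (n : ℕ) (hn : 3 ≤ n) (hno : Odd n) :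
    ∃ k : ℤ, 1 < k ∧
      ∏ i, ((α i) ^ (n : ℤ) + (α i) ^ (-(n : ℤ)) - 2) = (k : ℝ) ^ 2 := by
  obtain ⟨r, rfl⟩ : ∃ r, m = 2 * r + 3 := ⟨(m - 3) / 2, by grind⟩
  obtain ⟨h, rfl⟩ := hno
  have h_card : Fintype.card (Fin ((2 * r + 3 - 1) / 2)) = r + 1 := by simp
  have h_ne (i) : α i ≠ 0 := (hpos i).ne'
  have h_roots := chebyshevW_comp_eq_prod h_card h_ne hd
  have h_prod : ∏ i, (α i + (α i)⁻¹ - 2) = 1 :=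
    prod_sub_two_eq_one_of_chebyshevW_comp_eq_prod h_card (by exact_mod_cast h_roots)
  obtain ⟨k, hk⟩ := exists_int_eq_prod_chebyshevW_eval h_roots h
  refine ⟨k, ?_, ?_⟩
  · have h_factor (i) : 1 < (chebyshevW ℝ h).eval (α i + (α i)⁻¹) :=
      one_lt_chebyshevW_eval (two_le_add_inv (hpos i)) (by omega)
    have : Nonempty (Fin ((2 * r + 3 - 1) / 2)) := Fintype.card_pos_iff.mp (by omega)
    exact_mod_cast hk ▸ one_lt_prod_of_one_lt Finset.univ_nonempty fun i _ ↦ h_factor i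
  · simp only [zpow_neg, zpow_natCast, ← inv_pow,
      pow_add_pow_sub_two_of_mul_eq_one (mul_inv_cancel₀ (h_ne _)), Finset.prod_mul_distrib,
      h_prod, one_mul, Finset.prod_pow, hk]
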